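/- For every n ≥ 1 there exists exactly one function f : Λ(n)³ → ℤ satisfying the Duistermaat axioms (normalization, symplectic invariance, and the cocycle property). -/

import Mathlib

/-!
The cocycle property reduces everything to triples with transversality: if `M` is transversal to
`L₁`, `L₂`, `L₃`, then `f(L₁, L₂, L₃) = f(L₁, L₂, M) - f(L₁, L₃, M) + f(L₂, L₃, M)`. Such an `M`
always exists (`exists_transversal`): for a Lagrangian `L`, nonzero vectors `(x, t x) ∈ L` with
distinct real `t` have orthogonal `x`, so the graph of `t • 1` is transversal to `L` for all but
finitely many `t`.

Uniqueness: symplectic maps act transitively on transversal pairs (`exists_symplectic`), so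
`(L₁, M)` can be moved to `(G_0, G_∞)`, and then `L₂` becomes the graph of a Hermitian matrix.
Normalization and invariance therefore give `f(L₁, L₂, M)`: it is the negative index `qT` of the
form `ω(x, y)` on pairs `x ∈ L₁`, `y ∈ L₂`, `x - y ∈ M`.

Existence: the displayed formula, with `qT` on the right, serves as the definition. The axioms
follow once it is independent of `M`, and both this and normalization follow from the cocycle
identity for `qT` under transversality (`qT_cocycle`). In coordinates with `L₃ = G_∞`, `L₄ = G_0`,
`L₁ = G_A`, `L₂ = G_B` that identity reads
`n₋(A) + n₋(B - A) = n₋(B) + n₋(A⁻¹ - B⁻¹)`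
for invertible Hermitian `A`, `B` (`inertia_identity`): both sides are the negative index of the
block matrix `[[A, A], [A, B]]`, diagonalized by its two Schur complements. Transversality of the
two auxiliary Lagrangians is not needed for independence, since a third one transversal to
everything can be put between them.
-/

open Matrix

/-- The Hermitian symplectic space `ℂⁿ ⊕ ℂⁿ`. -/
abbrev SympSpace (n : ℕ) := (Fin n → ℂ) × (Fin n → ℂ)

/-- The symplectic form `ω((x₁,x₂),(y₁,y₂)) = ⟨x₁,y₂⟩ − ⟨x₂,y₁⟩`. -/
noncomputable def omegaForm {n : ℕ} (u v : SympSpace n) : ℂ :=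
  star u.1 ⬝ᵥ v.2 - star u.2 ⬝ᵥ v.1

/-- A subspace is Lagrangian iff it coincides with its symplectic complement. -/
def IsLagrangian {n : ℕ} (L : Submodule ℂ (SympSpace n)) : Prop :=
  ∀ v, v ∈ L ↔ ∀ u ∈ L, omegaForm u v = 0

/-- The Lagrangian Grassmannian `Λ(n)`. -/
abbrev LagGr (n : ℕ) := {L : Submodule ℂ (SympSpace n) // IsLagrangian L}

/-- The graph `G_M = {(x, Mx)}` of a matrix `M`. -/
noncomputable def graphOf {n : ℕ} (M : Matrix (Fin n) (Fin n) ℂ) :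
    Submodule ℂ (SympSpace n) := LinearMap.graph M.mulVecLin

/-- The vertical subspace `G_∞ = 0 ⊕ ℂⁿ`. -/
noncomputable def vertSub (n : ℕ) : Submodule ℂ (SympSpace n) :=
  (⊥ : Submodule ℂ (Fin n → ℂ)).prod (⊤ : Submodule ℂ (Fin n → ℂ))

/-- The negative index (Morse index) of a sesquilinear form: the maximal dimension of a
subspace on which it is negative definite. -/
noncomputable def formNegIdx {V : Type*} [AddCommGroup V] [Module ℂ V]
    (Q : V → V → ℂ) : ℕ :=
  sSup {d : ℕ | ∃ W : Submodule ℂ V, Module.finrank ℂ W = d ∧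
    ∀ x ∈ W, x ≠ 0 → (Q x x).re < 0}

/-- The number of negative eigenvalues (Morse index) of a Hermitian matrix, as the
maximal dimension of a subspace on which the associated form is negative definite. -/
noncomputable def negIdxM {n : ℕ} (A : Matrix (Fin n) (Fin n) ℂ) : ℕ :=
  formNegIdx (fun x y : Fin n → ℂ => star x ⬝ᵥ A.mulVec y)

/-- A symplectic transformation: a bijective linear map preserving `ω`. -/
def IsSymplecticMap {n : ℕ} (S : SympSpace n ≃ₗ[ℂ] SympSpace n) : Prop :=
  ∀ u v, omegaForm (S u) (S v) = omegaForm u v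

/-- The Duistermaat axioms for `f : Λ(n)³ → ℤ`: normalization, symplectic invariance
and the cocycle property. -/
def SatisfiesDuiAxioms {n : ℕ} (f : LagGr n → LagGr n → LagGr n → ℤ) : Prop :=
  (∀ (A : Matrix (Fin n) (Fin n) ℂ), A.IsHermitian →
    ∀ L₁ L₂ L₃ : LagGr n,
      L₁.val = graphOf (0 : Matrix (Fin n) (Fin n) ℂ) →
      L₂.val = graphOf A → L₃.val = vertSub n →
      f L₁ L₂ L₃ = negIdxM A) ∧
  (∀ S : SympSpace n ≃ₗ[ℂ] SympSpace n, IsSymplecticMap S →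
    ∀ L₁ L₂ L₃ M₁ M₂ M₃ : LagGr n,
      M₁.val = (L₁.val).map S.toLinearMap →
      M₂.val = (L₂.val).map S.toLinearMap →
      M₃.val = (L₃.val).map S.toLinearMap →
      f M₁ M₂ M₃ = f L₁ L₂ L₃) ∧
  (∀ L₁ L₂ L₃ L₄ : LagGr n,
    f L₁ L₂ L₃ - f L₁ L₂ L₄ + f L₁ L₃ L₄ - f L₂ L₃ L₄ = 0)

/-! ### Index of a real-valued function on a complex vector space -/

/-- The negative index of `q : V → ℝ`: the largest dimension of a subspace on which `q` is
negative away from `0`. -/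
noncomputable def negI {V : Type*} [AddCommGroup V] [Module ℂ V] (q : V → ℝ) : ℕ :=
  sSup {d : ℕ | ∃ W : Submodule ℂ V, Module.finrank ℂ W = d ∧ ∀ x ∈ W, x ≠ 0 → q x < 0}

/-- `V` splits into a subspace of dimension `d` on which `q` is negative definite and one on
which `q` is nonnegative. -/
def HasDec {V : Type*} [AddCommGroup V] [Module ℂ V] (q : V → ℝ) (d : ℕ) : Prop :=
  ∃ N P : Submodule ℂ V, IsCompl N P ∧ Module.finrank ℂ N = d ∧
    (∀ x ∈ N, x ≠ 0 → q x < 0) ∧ ∀ x ∈ P, 0 ≤ q x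

section Index

variable {V W : Type*} [AddCommGroup V] [Module ℂ V] [AddCommGroup W] [Module ℂ W]

/-- A subspace on which `q` is negative definite meets the nonnegative summand trivially, hence
has dimension at most `d`. -/
lemma HasDec.negI_eq [FiniteDimensional ℂ V] {q : V → ℝ} {d : ℕ} (h : HasDec q d) :
    negI q = d := by
  obtain ⟨N, P, hc, hd, hN, hP⟩ := h
  have hle : ∀ k ∈ {d : ℕ | ∃ W : Submodule ℂ V, Module.finrank ℂ W = d ∧
      ∀ x ∈ W, x ≠ 0 → q x < 0}, k ≤ d := by
    rintro k ⟨W, rfl, hW⟩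
    have hdis : Disjoint W P := by
      rw [Submodule.disjoint_def]
      intro x hxW hxP
      by_contra hx
      exact absurd (hW x hxW hx) (not_lt.mpr (hP x hxP))
    have h1 := Submodule.finrank_add_finrank_le_of_disjoint hdis
    have h2 := Submodule.finrank_add_eq_of_isCompl hc
    omega
  exact le_antisymm (csSup_le' hle) (le_csSup ⟨d, hle⟩ ⟨N, hd, hN⟩)

lemma negI_congr (e : V ≃ₗ[ℂ] W) {q : V → ℝ} {r : W → ℝ} (h : ∀ x, r (e x) = q x) :
    negI q = negI r := by
  unfold negI
  congr 1
  ext d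
  constructor
  · rintro ⟨U, rfl, hU⟩
    refine ⟨U.map e.toLinearMap, e.finrank_map_eq U, ?_⟩
    rintro _ ⟨x, hx, rfl⟩ hne
    have : r (e x) < 0 := by
      rw [h]
      exact hU x hx (by rintro rfl; simp at hne)
    exact this
  · rintro ⟨U, rfl, hU⟩
    refine ⟨U.map e.symm.toLinearMap, e.symm.finrank_map_eq U, ?_⟩
    rintro _ ⟨x, hx, rfl⟩ hne
    have : q (e.symm x) < 0 := by
      rw [← h, e.apply_symm_apply]
      exact hU x hx (by rintro rfl; simp at hne)
    exact this

lemma HasDec.congr (e : V ≃ₗ[ℂ] W) {q : V → ℝ} {r : W → ℝ} (h : ∀ x, r (e x) = q x) {d : ℕ}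
    (hq : HasDec q d) : HasDec r d := by
  obtain ⟨N, P, hc, hd, hN, hP⟩ := hq
  refine ⟨N.map e.toLinearMap, P.map e.toLinearMap, ?_, (e.finrank_map_eq N).trans hd, ?_, ?_⟩
  · exact hc.map (Submodule.orderIsoMapComap e)
  · rintro _ ⟨x, hx, rfl⟩ hne
    have : r (e x) < 0 := by
      rw [h]
      exact hN x hx (by rintro rfl; simp at hne)
    exact this
  · rintro _ ⟨x, hx, rfl⟩
    have : 0 ≤ r (e x) := by
      rw [h]
      exact hP x hx
    exact this

lemma HasDec.prod [FiniteDimensional ℂ V] [FiniteDimensional ℂ W]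
    {q : V → ℝ} {r : W → ℝ} {d k : ℕ} (hq : HasDec q d) (hr : HasDec r k)
    (q0 : q 0 = 0) (r0 : r 0 = 0) :
    HasDec (fun p : V × W => q p.1 + r p.2) (d + k) := by
  obtain ⟨N, P, hc, hd, hN, hP⟩ := hq
  obtain ⟨N', P', hc', hd', hN', hP'⟩ := hr
  refine ⟨N.prod N', P.prod P', ⟨?_, ?_⟩, ?_, ?_, ?_⟩
  · rw [disjoint_iff, Submodule.prod_inf_prod, hc.inf_eq_bot, hc'.inf_eq_bot,
      Submodule.prod_bot]
  · rw [codisjoint_iff, Submodule.prod_sup_prod, hc.sup_eq_top, hc'.sup_eq_top,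
      Submodule.prod_top]
  · let e : N.prod N' ≃ₗ[ℂ] N × N' :=
      { toFun := fun p => (⟨p.1.1, p.2.1⟩, ⟨p.1.2, p.2.2⟩)
        invFun := fun p => ⟨(p.1.1, p.2.1), p.1.2, p.2.2⟩
        map_add' := fun _ _ => rfl
        map_smul' := fun _ _ => rfl
        left_inv := fun _ => rfl
        right_inv := fun _ => rfl }
    rw [e.finrank_eq, Module.finrank_prod, hd, hd']
  · rintro ⟨x, y⟩ ⟨hx, hy⟩ hne
    have hx' : q x ≤ 0 := by
      rcases eq_or_ne x 0 with rfl | h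
      · exact q0.le
      · exact (hN x hx h).le
    have hy' : r y ≤ 0 := by
      rcases eq_or_ne y 0 with rfl | h
      · exact r0.le
      · exact (hN' y hy h).le
    rcases eq_or_ne x 0 with rfl | h
    · have := hN' y hy (by rintro rfl; exact hne rfl)
      show q 0 + r y < 0
      linarith
    · have := hN x hx h
      show q x + r y < 0
      linarith
  · rintro ⟨x, y⟩ ⟨hx, hy⟩
    exact add_nonneg (hP x hx) (hP' y hy)

end Index

/-! ### Hermitian matrices -/

section Matrices

variable {n : ℕ}

/-- The real quadratic form `x ↦ Re ⟨x, A x⟩`. -/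
noncomputable def qM (A : Matrix (Fin n) (Fin n) ℂ) (x : Fin n → ℂ) : ℝ :=
  (star x ⬝ᵥ A *ᵥ x).re

lemma negIdxM_eq (A : Matrix (Fin n) (Fin n) ℂ) : negIdxM A = negI (qM A) := rfl

lemma qM_zero (A : Matrix (Fin n) (Fin n) ℂ) : qM A 0 = 0 := by simp [qM]

lemma hasDec_diag (l : Fin n → ℝ) :
    ∃ d, HasDec (fun x : Fin n → ℂ => ∑ i, l i * Complex.normSq (x i)) d := by
  let Z (s : Set (Fin n)) : Submodule ℂ (Fin n → ℂ) :=
    { carrier := {x | ∀ i ∈ s, x i = 0}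
      add_mem' := by
        intro a b ha hb i hi
        simp [ha i hi, hb i hi]
      zero_mem' := fun _ _ => rfl
      smul_mem' := by
        intro c a ha i hi
        simp [ha i hi] }
  refine ⟨_, Z {i | 0 ≤ l i}, Z {i | l i < 0}, ⟨?_, ?_⟩, rfl, ?_, ?_⟩
  · rw [Submodule.disjoint_def]
    intro x hx hx'
    ext i
    rcases lt_or_ge (l i) 0 with h | h
    · exact hx' i h
    · exact hx i h
  · rw [codisjoint_iff, eq_top_iff]
    intro x _
    rw [Submodule.mem_sup]
    refine ⟨fun i => if l i < 0 then x i else 0, ?_, fun i => if l i < 0 then 0 else x i, ?_, ?_⟩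
    · intro i hi
      exact if_neg (not_lt.mpr hi)
    · intro i hi
      exact if_pos hi
    · ext i
      by_cases h : l i < 0 <;> simp [h]
  · intro x hx hne
    obtain ⟨j, hj⟩ := Function.ne_iff.mp hne
    have hneg : ∀ i, x i ≠ 0 → l i * Complex.normSq (x i) < 0 := by
      intro i hi
      refine mul_neg_of_neg_of_pos ?_ (Complex.normSq_pos.mpr hi)
      by_contra h
      exact hi (hx i (not_lt.mp h))
    refine Finset.sum_neg' (fun i _ => ?_) ⟨j, Finset.mem_univ _, hneg j hj⟩
    by_cases h : x i = 0
    · simp [h]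
    · exact (hneg i h).le
  · intro x hx
    refine Finset.sum_nonneg fun i _ => ?_
    rcases lt_or_ge (l i) 0 with h | h
    · have : x i = 0 := hx i h
      simp [this]
    · exact mul_nonneg h (Complex.normSq_nonneg _)

/-- By the spectral theorem the form of a Hermitian matrix is unitarily equivalent to a diagonal
one. -/
lemma hasDec_hermitian {A : Matrix (Fin n) (Fin n) ℂ} (hA : A.IsHermitian) :
    HasDec (qM A) (negI (qM A)) := by
  obtain ⟨d, hd⟩ := hasDec_diag hA.eigenvalues
  set U : Matrix (Fin n) (Fin n) ℂ := (hA.eigenvectorUnitary : Matrix (Fin n) (Fin n) ℂ) with hU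
  have h1 : Uᴴ * U = 1 := Unitary.coe_star_mul_self hA.eigenvectorUnitary
  have h2 : U * Uᴴ = 1 := Unitary.coe_mul_star_self hA.eigenvectorUnitary
  have hAU : A = U * diagonal (fun i => (hA.eigenvalues i : ℂ)) * Uᴴ := by
    have := hA.spectral_theorem
    rw [Unitary.conjStarAlgAut_apply] at this
    exact this
  have key : HasDec (qM A) d := by
    refine HasDec.congr (Matrix.toLin'OfInv h1 h2) ?_ hd
    intro x
    have : (Matrix.toLin'OfInv h1 h2) x = U *ᵥ x := by simp [Matrix.toLin'OfInv]
    rw [this, qM]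
    have e1 : A *ᵥ (U *ᵥ x) = U *ᵥ (diagonal (fun i => (hA.eigenvalues i : ℂ)) *ᵥ x) := by
      rw [mulVec_mulVec, mulVec_mulVec]
      congr 1
      conv_lhs => rw [hAU]
      rw [Matrix.mul_assoc, h1, Matrix.mul_one]
    rw [e1, star_mulVec, dotProduct_mulVec, vecMul_vecMul, h1, vecMul_one]
    simp only [dotProduct, mulVec_diagonal, Complex.re_sum]
    refine Finset.sum_congr rfl fun i _ => ?_
    simp [Complex.normSq_apply]
    ring
  rwa [key.negI_eq]

/-- Inertia of the block form `⟨x, A x⟩ + 2 Re ⟨x, A y⟩ + ⟨y, B y⟩`, computed by completing the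
square in each of the two variables. -/
lemma inertia_identity {A B A' B' : Matrix (Fin n) (Fin n) ℂ} (hA : A.IsHermitian)
    (hB : B.IsHermitian) (hA' : A'.IsHermitian) (hB' : B'.IsHermitian)
    (h1 : A * A' = 1) (h2 : B * B' = 1) :
    negI (qM A) + negI (qM (B - A)) = negI (qM B) + negI (qM (A' - B')) := by
  have d1 := (hasDec_hermitian hA).prod (hasDec_hermitian (hB.sub hA)) (qM_zero _) (qM_zero _)
  have d2 := (hasDec_hermitian hB).prod (hasDec_hermitian (hA'.sub hB')) (qM_zero _) (qM_zero _)
  have h1' : A' * A = 1 := mul_eq_one_comm.mp h1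
  have h2' : B' * B = 1 := mul_eq_one_comm.mp h2
  rw [← d1.negI_eq, ← d2.negI_eq]
  symm
  -- `(w, z)` corresponds to `(x + y, y)` with `x = A⁻¹ z` and `y = w - B⁻¹ z`.
  let e : ((Fin n → ℂ) × (Fin n → ℂ)) ≃ₗ[ℂ] ((Fin n → ℂ) × (Fin n → ℂ)) :=
    { toFun := fun p => (A' *ᵥ p.2 + (p.1 - B' *ᵥ p.2), p.1 - B' *ᵥ p.2)
      invFun := fun s => (s.2 + B' *ᵥ (A *ᵥ (s.1 - s.2)), A *ᵥ (s.1 - s.2))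
      map_add' := by
        intro p r
        ext i <;> simp [mulVec_add] <;> ring
      map_smul' := by
        intro c p
        ext i <;> simp [mulVec_smul] <;> ring
      left_inv := by
        rintro ⟨w, z⟩
        simp [mulVec_mulVec, h1]
      right_inv := by
        rintro ⟨s, y⟩
        simp [mulVec_mulVec, h1'] }
  refine negI_congr e ?_
  rintro ⟨w, z⟩
  show qM A (A' *ᵥ z + (w - B' *ᵥ z)) + qM (B - A) (w - B' *ᵥ z) = qM B w + qM (A' - B') z
  have move : ∀ (M : Matrix (Fin n) (Fin n) ℂ), M.IsHermitian → ∀ u v,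
      star (M *ᵥ u) ⬝ᵥ v = star u ⬝ᵥ M *ᵥ v := by
    intro M hM u v
    rw [star_mulVec, hM.eq, dotProduct_mulVec]
  simp only [qM]
  rw [← Complex.add_re, ← Complex.add_re]
  congr 1
  simp only [mulVec_add, mulVec_sub, sub_mulVec, star_add, star_sub, add_dotProduct,
    sub_dotProduct, dotProduct_add, dotProduct_sub, move _ hA', move _ hB', mulVec_mulVec,
    sub_mul, ← Matrix.mul_assoc, h1, h2, h1', h2', one_mulVec, Matrix.one_mul]
  ring

end Matrices

/-! ### Lagrangian subspaces -/

section Lagrangian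

variable {n : ℕ}

lemma omegaForm_add_right (u v w : SympSpace n) :
    omegaForm u (v + w) = omegaForm u v + omegaForm u w := by
  simp only [omegaForm, Prod.fst_add, Prod.snd_add, dotProduct_add]
  ring

lemma omegaForm_smul_right (c : ℂ) (u v : SympSpace n) :
    omegaForm u (c • v) = c * omegaForm u v := by
  simp only [omegaForm, Prod.smul_fst, Prod.smul_snd, dotProduct_smul, smul_eq_mul]
  ring

lemma star_omegaForm (u v : SympSpace n) : star (omegaForm u v) = -omegaForm v u := by
  simp only [omegaForm, star_sub, ← star_dotProduct]
  ring

/-- `ω(u, ·)` as a linear functional. -/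
noncomputable def omegaL (u : SympSpace n) : SympSpace n →ₗ[ℂ] ℂ where
  toFun := omegaForm u
  map_add' := omegaForm_add_right u
  map_smul' := fun c v => omegaForm_smul_right c u v

lemma omegaForm_add_left (u v w : SympSpace n) :
    omegaForm (u + v) w = omegaForm u w + omegaForm v w := by
  simp only [omegaForm, Prod.fst_add, Prod.snd_add, star_add, add_dotProduct]
  ring

lemma omegaForm_smul_left (c : ℂ) (u v : SympSpace n) :
    omegaForm (c • u) v = star c * omegaForm u v := by
  simp only [omegaForm, Prod.smul_fst, Prod.smul_snd, star_smul, smul_dotProduct, smul_eq_mul]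
  ring

/-- `ω(·, v)` as a conjugate-linear functional. -/
noncomputable def omegaR (v : SympSpace n) : SympSpace n →ₛₗ[starRingEnd ℂ] ℂ where
  toFun u := omegaForm u v
  map_add' u w := omegaForm_add_left u w v
  map_smul' := fun c u => omegaForm_smul_left c u v

lemma IsLagrangian.omega_eq_zero {L : Submodule ℂ (SympSpace n)} (hL : IsLagrangian L)
    {u v : SympSpace n} (hu : u ∈ L) (hv : v ∈ L) : omegaForm u v = 0 :=
  (hL v).mp hv u hu

/-- The linear map `v ↦ (ω(eᵢ, v))ᵢ` on `M`, for a basis `e` of `L`. -/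
noncomputable def pairing {L : Submodule ℂ (SympSpace n)} {k : ℕ} (b : Module.Basis (Fin k) ℂ L)
    (M : Submodule ℂ (SympSpace n)) : M →ₗ[ℂ] (Fin k → ℂ) :=
  LinearMap.pi fun i => (omegaL (b i : SympSpace n)).comp M.subtype

lemma pairing_apply {L : Submodule ℂ (SympSpace n)} {k : ℕ} (b : Module.Basis (Fin k) ℂ L)
    (M : Submodule ℂ (SympSpace n)) (v : M) (i : Fin k) :
    pairing b M v i = omegaForm (b i : SympSpace n) v := rfl

/-- The form `ω(a, v)` is computed from the coordinates of `a` in a basis of `L`. -/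
lemma basis_omega {L : Submodule ℂ (SympSpace n)} {k : ℕ} (b : Module.Basis (Fin k) ℂ L)
    (a : L) (v : SympSpace n) :
    omegaForm (a : SympSpace n) v =
      star (b.equivFun a) ⬝ᵥ fun i => omegaForm (b i : SympSpace n) v := by
  have h : (a : SympSpace n) = ∑ i, b.equivFun a i • (b i : SympSpace n) := by
    have := congrArg L.subtype (b.sum_equivFun a)
    rw [map_sum] at this
    exact this.symm
  have h2 : omegaForm (a : SympSpace n) v =
      omegaR v (∑ i, b.equivFun a i • (b i : SympSpace n)) := by
    rw [← h]; rfl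
  rw [h2, map_sum]
  simp only [dotProduct]
  refine Finset.sum_congr rfl fun i _ => ?_
  rw [LinearMap.map_smulₛₗ]
  rfl

lemma pairing_injective {L M : Submodule ℂ (SympSpace n)} (hL : IsLagrangian L)
    (hd : Disjoint L M) {k : ℕ} (b : Module.Basis (Fin k) ℂ L) :
    Function.Injective (pairing b M) := by
  rw [injective_iff_map_eq_zero]
  intro v hv
  have hvL : (v : SympSpace n) ∈ L := by
    rw [hL]
    intro u hu
    rw [basis_omega b ⟨u, hu⟩]
    have : (fun i => omegaForm (b i : SympSpace n) v) = 0 := hv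
    rw [this, dotProduct_zero]
  exact Subtype.ext (Submodule.disjoint_def.mp hd v hvL v.2)

lemma finrank_le_of_disjoint {L M : Submodule ℂ (SympSpace n)} (hL : IsLagrangian L)
    (hd : Disjoint L M) : Module.finrank ℂ M ≤ Module.finrank ℂ L := by
  have := LinearMap.finrank_le_finrank_of_injective
    (pairing_injective hL hd (Module.finBasis ℂ L))
  simpa using this

open scoped ComplexOrder in
lemma eq_of_star_dotProduct {v w : Fin n → ℂ} (h : ∀ x, star x ⬝ᵥ v = star x ⬝ᵥ w) : v = w := by
  have := h (v - w)
  rw [← sub_eq_zero, ← dotProduct_sub, dotProduct_star_self_eq_zero] at this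
  exact sub_eq_zero.mp this

lemma star_mulVec_dotProduct {A : Matrix (Fin n) (Fin n) ℂ} (hA : A.IsHermitian)
    (x y : Fin n → ℂ) : star (A *ᵥ x) ⬝ᵥ y = star x ⬝ᵥ A *ᵥ y := by
  rw [star_mulVec, hA.eq, dotProduct_mulVec]

lemma mem_graphOf {A : Matrix (Fin n) (Fin n) ℂ} {v : SympSpace n} :
    v ∈ graphOf A ↔ v.2 = A *ᵥ v.1 := by
  simp [graphOf, LinearMap.mem_graph_iff]

lemma mem_vertSub {v : SympSpace n} : v ∈ vertSub n ↔ v.1 = 0 := by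
  simp [vertSub, Submodule.mem_prod]

lemma isLagrangian_graphOf {A : Matrix (Fin n) (Fin n) ℂ} (hA : A.IsHermitian) :
    IsLagrangian (graphOf A) := by
  intro v
  rw [mem_graphOf]
  constructor
  · intro hv u hu
    rw [mem_graphOf] at hu
    rw [omegaForm, hu, hv, star_mulVec_dotProduct hA, sub_self]
  · intro h
    refine eq_of_star_dotProduct fun x => ?_
    have := h (x, A *ᵥ x) (mem_graphOf.mpr rfl)
    rw [omegaForm, star_mulVec_dotProduct hA] at this
    exact sub_eq_zero.mp this

lemma isLagrangian_vertSub : IsLagrangian (vertSub n) := by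
  intro v
  rw [mem_vertSub]
  constructor
  · intro hv u hu
    rw [mem_vertSub] at hu
    simp [omegaForm, hu, hv]
  · intro h
    refine eq_of_star_dotProduct fun x => ?_
    have := h (0, x) (mem_vertSub.mpr rfl)
    simpa [omegaForm] using this

lemma finrank_graphOf (A : Matrix (Fin n) (Fin n) ℂ) : Module.finrank ℂ (graphOf A) = n := by
  have e : (Fin n → ℂ) ≃ₗ[ℂ] graphOf A :=
    { toFun := fun x => ⟨(x, A *ᵥ x), mem_graphOf.mpr rfl⟩
      invFun := fun v => v.1.1
      map_add' := fun x y => by ext <;> simp [mulVec_add]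
      map_smul' := fun c y => by ext <;> simp [mulVec_smul]
      left_inv := fun x => rfl
      right_inv := fun v => Subtype.ext (Prod.ext rfl (mem_graphOf.mp v.2).symm) }
  rw [← e.finrank_eq]
  simp

/-- The graph of the scalar matrix `t`. -/
noncomputable def scalarGraph (n : ℕ) (t : ℝ) : Submodule ℂ (SympSpace n) :=
  graphOf ((t : ℂ) • (1 : Matrix (Fin n) (Fin n) ℂ))

lemma mem_scalarGraph {t : ℝ} {v : SympSpace n} : v ∈ scalarGraph n t ↔ v.2 = (t : ℂ) • v.1 := by
  rw [scalarGraph, mem_graphOf, smul_mulVec, one_mulVec]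

lemma isLagrangian_scalarGraph (t : ℝ) : IsLagrangian (scalarGraph n t) := by
  refine isLagrangian_graphOf ?_
  rw [IsHermitian, conjTranspose_smul]
  simp

/-- Nonzero vectors `(x, t x)` of `L` for distinct values of `t` have mutually orthogonal first
components, so only finitely many `t` are exceptional. -/
lemma finite_not_disjoint {L : Submodule ℂ (SympSpace n)} (hL : IsLagrangian L) :
    {t : ℝ | ¬ Disjoint L (scalarGraph n t)}.Finite := by
  set T := {t : ℝ | ¬ Disjoint L (scalarGraph n t)} with hT
  have hex : ∀ t : T, ∃ x : Fin n → ℂ, x ≠ 0 ∧ (x, (t.1 : ℂ) • x) ∈ L := by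
    rintro ⟨t, ht⟩
    have ht' : ¬ Disjoint L (scalarGraph n t) := ht
    rw [Submodule.disjoint_def] at ht'
    push Not at ht'
    obtain ⟨⟨x, y⟩, hv, hg, hne⟩ := ht'
    have hy : y = (t : ℂ) • x := mem_scalarGraph.mp hg
    subst hy
    refine ⟨x, ?_, hv⟩
    rintro rfl
    simp at hne
  choose x hx0 hxL using hex
  have hli : LinearIndependent ℂ
      (fun t : T => (WithLp.toLp 2 (x t) : EuclideanSpace ℂ (Fin n))) := by
    refine linearIndependent_of_ne_zero_of_inner_eq_zero ?_ ?_
    · intro t h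
      exact hx0 t (by simpa using h)
    · intro s t hst
      have h := hL.omega_eq_zero (hxL s) (hxL t)
      simp only [omegaForm, star_smul, dotProduct_smul, smul_dotProduct, smul_eq_mul] at h
      have hne : ((t.1 : ℂ) - (s.1 : ℂ)) ≠ 0 := by
        rw [sub_ne_zero]
        intro h'
        exact hst (Subtype.ext (Complex.ofReal_injective h').symm)
      have h0 : ((t.1 : ℂ) - (s.1 : ℂ)) * (star (x s) ⬝ᵥ x t) = 0 := by
        have : star (s.1 : ℂ) = s.1 := Complex.conj_ofReal _
        rw [this] at h
        linear_combination h
      have := (mul_eq_zero.mp h0).resolve_left hne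
      rw [EuclideanSpace.inner_eq_star_dotProduct]
      simpa [dotProduct_comm] using this
  have := hli.finite
  exact Set.toFinite T

/-- Finitely many Lagrangian subspaces have a common transversal Lagrangian subspace. -/
lemma exists_transversal (l : List (LagGr n)) :
    ∃ M : LagGr n, ∀ L ∈ l, Disjoint L.val M.val := by
  have hfin : (⋃ L ∈ l.toFinset, {t : ℝ | ¬ Disjoint L.val (scalarGraph n t)}).Finite := by
    classical
    exact Set.Finite.biUnion (Finset.finite_toSet _) fun L _ => finite_not_disjoint L.2
  obtain ⟨t, ht⟩ := hfin.infinite_compl.nonempty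
  refine ⟨⟨scalarGraph n t, isLagrangian_scalarGraph t⟩, fun L hL => ?_⟩
  by_contra h
  exact ht (Set.mem_biUnion (show L ∈ l.toFinset by simpa using hL) h)

lemma finrank_lagrangian {L : Submodule ℂ (SympSpace n)} (hL : IsLagrangian L) :
    Module.finrank ℂ L = n := by
  obtain ⟨t, ht⟩ := (finite_not_disjoint hL).infinite_compl.nonempty
  have hd : Disjoint L (scalarGraph n t) := not_not.mp ht
  have h1 := finrank_le_of_disjoint hL hd
  have h2 := finrank_le_of_disjoint (isLagrangian_scalarGraph t) hd.symm
  rw [scalarGraph, finrank_graphOf] at h1 h2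
  omega

lemma isCompl_lagrangian {L M : Submodule ℂ (SympSpace n)} (hL : IsLagrangian L)
    (hM : IsLagrangian M) (hd : Disjoint L M) : IsCompl L M := by
  refine (Submodule.isCompl_iff_disjoint L M ?_).mpr hd
  rw [finrank_lagrangian hL, finrank_lagrangian hM]
  simp

lemma isLagrangian_map {S : SympSpace n ≃ₗ[ℂ] SympSpace n} (hS : IsSymplecticMap S)
    {L : Submodule ℂ (SympSpace n)} (hL : IsLagrangian L) :
    IsLagrangian (L.map S.toLinearMap) := by
  intro v
  obtain ⟨w, rfl⟩ := S.surjective v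
  have h1 : S w ∈ L.map S.toLinearMap ↔ w ∈ L := 
    ⟨fun ⟨_, ha, h⟩ => S.injective h ▸ ha, fun h => Submodule.mem_map_of_mem h⟩
  rw [h1, hL]
  constructor
  · rintro h _ ⟨u, hu, rfl⟩
    exact (hS u w).trans (h u hu)
  · intro h u hu
    rw [← hS u w]
    exact h _ (Submodule.mem_map_of_mem hu)

/-- The symplectic group acts transitively on transversal pairs of Lagrangian subspaces: in a
basis of `L` and the `ω`-dual basis of `M` the form `ω` is the standard one. -/
lemma exists_symplectic {L M : Submodule ℂ (SympSpace n)} (hL : IsLagrangian L)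
    (hM : IsLagrangian M) (hd : Disjoint L M) :
    ∃ S : SympSpace n ≃ₗ[ℂ] SympSpace n, IsSymplecticMap S ∧
      L.map S.toLinearMap = graphOf 0 ∧ M.map S.toLinearMap = vertSub n := by
  let b : Module.Basis (Fin n) ℂ L := Module.finBasisOfFinrankEq ℂ L (finrank_lagrangian hL)
  let φ : M ≃ₗ[ℂ] (Fin n → ℂ) := LinearEquiv.ofInjectiveOfFinrankEq (pairing b M)
    (pairing_injective hL hd b) (by simp [finrank_lagrangian hM])
  let c := Submodule.prodEquivOfIsCompl L M (isCompl_lagrangian hL hM hd)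
  let S : SympSpace n ≃ₗ[ℂ] SympSpace n := c.symm.trans (b.equivFun.prodCongr φ)
  have hSc : ∀ p : L × M, S (p.1 + p.2 : SympSpace n) = (b.equivFun p.1, φ p.2) := by
    intro p
    have : c p = (p.1 + p.2 : SympSpace n) := rfl
    rw [← this]
    simp [S]
  have hφ : ∀ m : M, φ m = fun i => omegaForm (b i : SympSpace n) m := fun m => rfl
  refine ⟨S, ?_, ?_, ?_⟩
  · intro u v
    obtain ⟨p, rfl⟩ := c.surjective u
    obtain ⟨r, rfl⟩ := c.surjective v
    have hp : c p = (p.1 + p.2 : SympSpace n) := rfl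
    have hr : c r = (r.1 + r.2 : SympSpace n) := rfl
    rw [hp, hr, hSc, hSc]
    have e1 : star (b.equivFun p.1) ⬝ᵥ φ r.2 = omegaForm (p.1 : SympSpace n) r.2 := by
      rw [hφ, ← basis_omega]
    have e2 : star (φ p.2) ⬝ᵥ b.equivFun r.1 = -omegaForm (p.2 : SympSpace n) r.1 := by
      rw [← star_omegaForm, basis_omega b, hφ]
      exact star_dotProduct _ _
    rw [omegaForm]
    dsimp only
    rw [e1, e2]
    simp only [omegaForm_add_left, omegaForm_add_right]
    rw [hL.omega_eq_zero p.1.2 r.1.2, hM.omega_eq_zero p.2.2 r.2.2]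
    ring
  · ext v
    rw [mem_graphOf, zero_mulVec]
    constructor
    · rintro ⟨a, ha, rfl⟩
      have := hSc (⟨a, ha⟩, 0)
      simp only [ZeroMemClass.coe_zero, add_zero] at this
      show (S a).2 = 0
      rw [this]
      simp
    · intro hv
      refine ⟨b.equivFun.symm v.1, (b.equivFun.symm v.1).2, ?_⟩
      have := hSc (b.equivFun.symm v.1, 0)
      simp only [ZeroMemClass.coe_zero, add_zero] at this
      refine Eq.trans this ?_
      rw [LinearEquiv.apply_symm_apply, map_zero, ← hv]
  · ext v
    rw [mem_vertSub]
    constructor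
    · rintro ⟨a, ha, rfl⟩
      have := hSc (0, ⟨a, ha⟩)
      simp only [ZeroMemClass.coe_zero, zero_add] at this
      show (S a).1 = 0
      rw [this]
      simp
    · intro hv
      refine ⟨φ.symm v.2, (φ.symm v.2).2, ?_⟩
      have := hSc (0, φ.symm v.2)
      simp only [ZeroMemClass.coe_zero, zero_add] at this
      refine Eq.trans this ?_
      ext <;> simp [hv]

lemma exists_eq_graphOf {L : Submodule ℂ (SympSpace n)} (hL : IsLagrangian L)
    (hd : Disjoint L (vertSub n)) :
    ∃ A : Matrix (Fin n) (Fin n) ℂ, A.IsHermitian ∧ L = graphOf A := by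
  let p : L →ₗ[ℂ] (Fin n → ℂ) := (LinearMap.fst ℂ _ _).comp L.subtype
  have hp : Function.Injective p := by
    rw [injective_iff_map_eq_zero]
    intro v hv
    exact Subtype.ext (Submodule.disjoint_def.mp hd v v.2 (mem_vertSub.mpr hv))
  let e : L ≃ₗ[ℂ] (Fin n → ℂ) := LinearEquiv.ofInjectiveOfFinrankEq p hp
    (by simp [finrank_lagrangian hL])
  let g : (Fin n → ℂ) →ₗ[ℂ] (Fin n → ℂ) :=
    ((LinearMap.snd ℂ _ _).comp L.subtype).comp e.symm.toLinearMap
  let A := LinearMap.toMatrix' g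
  have hA : ∀ x, A *ᵥ x = g x := fun x => by
    rw [← Matrix.toLin'_apply, Matrix.toLin'_toMatrix']
  have hmem : ∀ x, (x, A *ᵥ x) ∈ L := by
    intro x
    have : (x, A *ᵥ x) = (e.symm x : SympSpace n) := by
      refine Prod.ext ?_ ?_
      · exact (e.apply_symm_apply x).symm
      · exact hA x
    rw [this]
    exact (e.symm x).2
  refine ⟨A, ?_, ?_⟩
  · have hsym : ∀ x y, star x ⬝ᵥ A *ᵥ y = star x ⬝ᵥ Aᴴ *ᵥ y := by
      intro x y
      have := hL.omega_eq_zero (hmem x) (hmem y)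
      rw [omegaForm, sub_eq_zero] at this
      dsimp only at this
      rw [this, star_mulVec, dotProduct_mulVec]
    refine Matrix.ext_of_mulVec_single fun i => ?_
    exact (eq_of_star_dotProduct fun x => hsym x _).symm
  · ext v
    rw [mem_graphOf]
    constructor
    · intro hv
      have h := L.sub_mem hv (hmem v.1)
      have := Submodule.disjoint_def.mp hd _ h (mem_vertSub.mpr (by simp))
      have h2 := congrArg Prod.snd this
      simpa [sub_eq_zero] using h2
    · intro hv
      have := hmem v.1
      rwa [← hv] at this

end Lagrangian

/-! ### The index of a triple with transversality -/

section Triple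

variable {n : ℕ}

/-- Pairs `(x, y) ∈ L₁ × L₂` with `x - y ∈ L₃`. If `L₁` and `L₂` are transversal to `L₃`, this is
the graph of the projection `L₁ → L₂` along `L₃`. -/
def pairSub (L₁ L₂ L₃ : Submodule ℂ (SympSpace n)) : Submodule ℂ (SympSpace n × SympSpace n) where
  carrier := {p | p.1 ∈ L₁ ∧ p.2 ∈ L₂ ∧ p.1 - p.2 ∈ L₃}
  add_mem' := by
    rintro p r ⟨h1, h2, h3⟩ ⟨k1, k2, k3⟩
    refine ⟨L₁.add_mem h1 k1, L₂.add_mem h2 k2, ?_⟩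
    have := L₃.add_mem h3 k3
    rwa [sub_add_sub_comm] at this
  zero_mem' := by simp
  smul_mem' := by
    rintro c p ⟨h1, h2, h3⟩
    refine ⟨L₁.smul_mem c h1, L₂.smul_mem c h2, ?_⟩
    have := L₃.smul_mem c h3
    rwa [smul_sub] at this

/-- The negative index of `(x, y) ↦ Re ω(x, y)` on `pairSub L₁ L₂ L₃`. It is the value of the
invariant when `L₁` and `L₂` are both transversal to `L₃`, but not in general. -/
noncomputable def qT (L₁ L₂ L₃ : Submodule ℂ (SympSpace n)) : ℕ :=
  negI (fun p : pairSub L₁ L₂ L₃ => (omegaForm p.1.1 p.1.2).re)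

lemma qT_eq {U : Type*} [AddCommGroup U] [Module ℂ U] {L₁ L₂ L₃ : Submodule ℂ (SympSpace n)}
    (φ : U →ₗ[ℂ] SympSpace n × SympSpace n) (hφ : Function.Injective φ)
    (hr : ∀ p, p ∈ pairSub L₁ L₂ L₃ ↔ ∃ x, φ x = p) {r : U → ℝ}
    (h : ∀ x, (omegaForm (φ x).1 (φ x).2).re = r x) : qT L₁ L₂ L₃ = negI r := by
  have hmem : ∀ x, φ x ∈ pairSub L₁ L₂ L₃ := fun x => (hr _).mpr ⟨x, rfl⟩
  let e : U ≃ₗ[ℂ] pairSub L₁ L₂ L₃ := LinearEquiv.ofBijective (φ.codRestrict _ hmem)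
    ⟨fun x y hxy => hφ (congrArg Subtype.val hxy), fun p => by
      obtain ⟨x, hx⟩ := (hr p).mp p.2
      exact ⟨x, Subtype.ext hx⟩⟩
  exact (negI_congr e h).symm

lemma qT_map {S : SympSpace n ≃ₗ[ℂ] SympSpace n} (hS : IsSymplecticMap S)
    (L₁ L₂ L₃ : Submodule ℂ (SympSpace n)) :
    qT (L₁.map S.toLinearMap) (L₂.map S.toLinearMap) (L₃.map S.toLinearMap) = qT L₁ L₂ L₃ := by
  refine qT_eq ((S.prodCongr S).toLinearMap.comp (pairSub L₁ L₂ L₃).subtype) ?_ ?_ ?_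
  · exact (S.prodCongr S).injective.comp Subtype.val_injective
  · intro p
    constructor
    · rintro ⟨⟨x, hx, hx'⟩, ⟨y, hy, hy'⟩, ⟨z, hz, hz'⟩⟩
      refine ⟨⟨(x, y), hx, hy, ?_⟩, Prod.ext hx' hy'⟩
      have : S z = S (x - y) := by
        rw [map_sub]
        exact hz'.trans (by rw [← hx', ← hy']; rfl)
      rw [S.injective this] at hz
      exact hz
    · rintro ⟨⟨⟨x, y⟩, hx, hy, hz⟩, rfl⟩
      refine ⟨⟨x, hx, rfl⟩, ⟨y, hy, rfl⟩, ⟨x - y, hz, ?_⟩⟩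
      simp
  · intro p
    exact congrArg Complex.re (hS _ _)

/-- The map `x ↦ ((M₁ x, M₂ x), (M₃ x, M₄ x))`. -/
noncomputable def quadMap (M₁ M₂ M₃ M₄ : Matrix (Fin n) (Fin n) ℂ) :
    (Fin n → ℂ) →ₗ[ℂ] SympSpace n × SympSpace n :=
  (M₁.mulVecLin.prod M₂.mulVecLin).prod (M₃.mulVecLin.prod M₄.mulVecLin)

lemma quadMap_apply (M₁ M₂ M₃ M₄ : Matrix (Fin n) (Fin n) ℂ) (x : Fin n → ℂ) :
    quadMap M₁ M₂ M₃ M₄ x = ((M₁ *ᵥ x, M₂ *ᵥ x), (M₃ *ᵥ x, M₄ *ᵥ x)) := rfl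

lemma qT_graph_graph_vert {A B : Matrix (Fin n) (Fin n) ℂ} (hA : A.IsHermitian) :
    qT (graphOf A) (graphOf B) (vertSub n) = negI (qM (B - A)) := by
  refine qT_eq (quadMap 1 A 1 B) ?_ ?_ ?_
  · intro x y h
    simpa [quadMap_apply] using congrArg (fun p => p.1.1) h
  · rintro ⟨⟨a, b⟩, ⟨c, d⟩⟩
    simp only [pairSub, Submodule.mem_mk, AddSubmonoid.mem_mk, AddSubsemigroup.mem_mk,
      Set.mem_ofPred_eq, mem_graphOf, mem_vertSub, Prod.fst_sub, quadMap_apply, one_mulVec]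
    constructor
    · rintro ⟨rfl, rfl, h⟩
      rw [sub_eq_zero] at h
      exact ⟨a, by rw [h]⟩
    · rintro ⟨x, h⟩
      simp only [Prod.mk.injEq] at h
      obtain ⟨⟨rfl, rfl⟩, rfl, rfl⟩ := h
      simp
  · intro x
    simp only [quadMap_apply, omegaForm, one_mulVec, star_mulVec_dotProduct hA, qM, sub_mulVec,
      dotProduct_sub]

lemma qT_graph_graph_zero {A B A' B' : Matrix (Fin n) (Fin n) ℂ} (hA' : A'.IsHermitian)
    (h1 : A * A' = 1) (h2 : B * B' = 1) :
    qT (graphOf A) (graphOf B) (graphOf 0) = negI (qM (A' - B')) := by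
  have h1' : A' * A = 1 := mul_eq_one_comm.mp h1
  have h2' : B' * B = 1 := mul_eq_one_comm.mp h2
  refine qT_eq (quadMap A' 1 B' 1) ?_ ?_ ?_
  · intro x y h
    simpa [quadMap_apply] using congrArg (fun p => p.1.2) h
  · rintro ⟨⟨a, b⟩, ⟨c, d⟩⟩
    simp only [pairSub, Submodule.mem_mk, AddSubmonoid.mem_mk, AddSubsemigroup.mem_mk,
      Set.mem_ofPred_eq, mem_graphOf, Prod.snd_sub, zero_mulVec, quadMap_apply,
      one_mulVec]
    constructor
    · rintro ⟨rfl, rfl, h⟩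
      rw [sub_eq_zero] at h
      refine ⟨A *ᵥ a, ?_⟩
      rw [mulVec_mulVec, h1', one_mulVec, h, mulVec_mulVec, h2', one_mulVec]
    · rintro ⟨x, h⟩
      simp only [Prod.mk.injEq] at h
      obtain ⟨⟨rfl, rfl⟩, rfl, rfl⟩ := h
      simp [mulVec_mulVec, h1, h2]
  · intro x
    simp only [quadMap_apply, omegaForm, one_mulVec, star_mulVec_dotProduct hA', qM, sub_mulVec,
      dotProduct_sub]

lemma qT_graph_vert_zero (A : Matrix (Fin n) (Fin n) ℂ) :
    qT (graphOf A) (vertSub n) (graphOf 0) = negI (qM A) := by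
  refine qT_eq (quadMap 1 A 0 A) ?_ ?_ ?_
  · intro x y h
    simpa [quadMap_apply] using congrArg (fun p => p.1.1) h
  · rintro ⟨⟨a, b⟩, ⟨c, d⟩⟩
    simp only [pairSub, Submodule.mem_mk, AddSubmonoid.mem_mk, AddSubsemigroup.mem_mk,
      Set.mem_ofPred_eq, mem_graphOf, mem_vertSub, Prod.snd_sub, zero_mulVec, quadMap_apply,
      one_mulVec]
    constructor
    · rintro ⟨rfl, rfl, h⟩
      rw [sub_eq_zero] at h
      exact ⟨a, by rw [h]⟩
    · rintro ⟨x, h⟩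
      simp only [Prod.mk.injEq] at h
      obtain ⟨⟨rfl, rfl⟩, rfl, rfl⟩ := h
      simp
  · intro x
    simp [quadMap_apply, omegaForm, qM]

lemma disjoint_map (S : SympSpace n ≃ₗ[ℂ] SympSpace n) {L M : Submodule ℂ (SympSpace n)}
    (h : Disjoint L M) : Disjoint (L.map S.toLinearMap) (M.map S.toLinearMap) :=
  Submodule.disjoint_map S.injective h

/-- A Hermitian matrix whose graph is transversal to `G_0` has a Hermitian inverse. -/
lemma exists_inverse {A : Matrix (Fin n) (Fin n) ℂ} (hA : A.IsHermitian)
    (hd : Disjoint (graphOf A) (graphOf 0)) :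
    ∃ A' : Matrix (Fin n) (Fin n) ℂ, A'.IsHermitian ∧ A * A' = 1 := by
  have hinj : Function.Injective A.mulVec := by
    intro x y hxy
    have h0 : A *ᵥ (x - y) = 0 := by
      rw [mulVec_sub]
      exact sub_eq_zero.mpr hxy
    have := Submodule.disjoint_def.mp hd (x - y, 0) (mem_graphOf.mpr h0.symm)
      (mem_graphOf.mpr (by simp))
    exact sub_eq_zero.mp (congrArg Prod.fst this)
  have hu : IsUnit A := Matrix.mulVec_injective_iff_isUnit.mp hinj
  exact ⟨A⁻¹, hA.inv, Matrix.mul_nonsing_inv A ((Matrix.isUnit_iff_isUnit_det A).mp hu)⟩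

/-- The cocycle identity when all pairs except possibly `(L₁, L₂)` are transversal. With `L₃`
moved to `G_∞` and `L₄` to `G_0` it becomes `inertia_identity`. -/
lemma qT_cocycle {L₁ L₂ L₃ L₄ : Submodule ℂ (SympSpace n)} (h₁ : IsLagrangian L₁)
    (h₂ : IsLagrangian L₂) (h₃ : IsLagrangian L₃) (h₄ : IsLagrangian L₄)
    (d13 : Disjoint L₁ L₃) (d14 : Disjoint L₁ L₄) (d23 : Disjoint L₂ L₃) (d24 : Disjoint L₂ L₄)
    (d34 : Disjoint L₃ L₄) :
    (qT L₁ L₂ L₃ : ℤ) - qT L₁ L₂ L₄ + qT L₁ L₃ L₄ - qT L₂ L₃ L₄ = 0 := by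
  obtain ⟨S, hS, e4, e3⟩ := exists_symplectic h₄ h₃ d34.symm
  rw [← qT_map hS L₁ L₂ L₃, ← qT_map hS L₁ L₂ L₄, ← qT_map hS L₁ L₃ L₄, ← qT_map hS L₂ L₃ L₄]
  have d13' := disjoint_map S d13
  have d14' := disjoint_map S d14
  have d23' := disjoint_map S d23
  have d24' := disjoint_map S d24
  rw [e3] at d13' d23'
  rw [e4] at d14' d24'
  obtain ⟨A, hA, eA⟩ := exists_eq_graphOf (isLagrangian_map hS h₁) d13'
  obtain ⟨B, hB, eB⟩ := exists_eq_graphOf (isLagrangian_map hS h₂) d23'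
  rw [eA] at d14'
  rw [eB] at d24'
  obtain ⟨A', hA', hAA'⟩ := exists_inverse hA d14'
  obtain ⟨B', hB', hBB'⟩ := exists_inverse hB d24'
  rw [eA, eB, e3, e4, qT_graph_graph_vert hA, qT_graph_graph_zero hA' hAA' hBB',
    qT_graph_vert_zero, qT_graph_vert_zero]
  have := inertia_identity hA hB hA' hB' hAA' hBB'
  omega

/-! ### The invariant -/

/-- The value of the invariant at `(L₁, L₂, L₃)` computed from an auxiliary Lagrangian `M`. -/
noncomputable def auxIdx (L₁ L₂ L₃ M : LagGr n) : ℤ :=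
  (qT L₁.val L₂.val M.val : ℤ) - qT L₁.val L₃.val M.val + qT L₂.val L₃.val M.val

lemma auxIdx_eq {L₁ L₂ L₃ M N : LagGr n} (hM : ∀ L ∈ [L₁, L₂, L₃], Disjoint L.val M.val)
    (hN : ∀ L ∈ [L₁, L₂, L₃], Disjoint L.val N.val) :
    auxIdx L₁ L₂ L₃ M = auxIdx L₁ L₂ L₃ N := by
  -- It suffices to treat transversal `M` and `N`; in general both are compared to a third `K`.
  suffices key : ∀ M K : LagGr n, (∀ L ∈ [L₁, L₂, L₃], Disjoint L.val M.val) →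
      (∀ L ∈ [L₁, L₂, L₃], Disjoint L.val K.val) → Disjoint M.val K.val →
      auxIdx L₁ L₂ L₃ M = auxIdx L₁ L₂ L₃ K by
    obtain ⟨K, hK⟩ := exists_transversal [L₁, L₂, L₃, M, N]
    simp only [List.mem_cons, List.not_mem_nil, or_false, forall_eq_or_imp, forall_eq] at hK
    have hK' : ∀ L ∈ [L₁, L₂, L₃], Disjoint L.val K.val := by
      simp only [List.mem_cons, List.not_mem_nil, or_false, forall_eq_or_imp, forall_eq]
      exact ⟨hK.1, hK.2.1, hK.2.2.1⟩
    rw [key M K hM hK' hK.2.2.2.1, key N K hN hK' hK.2.2.2.2]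
  intro M K hM hK hMK
  simp only [List.mem_cons, List.not_mem_nil, or_false, forall_eq_or_imp, forall_eq] at hM hK
  have e12 := qT_cocycle L₁.2 L₂.2 M.2 K.2 hM.1 hK.1 hM.2.1 hK.2.1 hMK
  have e13 := qT_cocycle L₁.2 L₃.2 M.2 K.2 hM.1 hK.1 hM.2.2 hK.2.2 hMK
  have e23 := qT_cocycle L₂.2 L₃.2 M.2 K.2 hM.2.1 hK.2.1 hM.2.2 hK.2.2 hMK
  unfold auxIdx
  linarith

/-- The Duistermaat index: `auxIdx` for an arbitrary choice of common transversal. -/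
noncomputable def duiIdx (L₁ L₂ L₃ : LagGr n) : ℤ :=
  auxIdx L₁ L₂ L₃ (exists_transversal [L₁, L₂, L₃]).choose

lemma duiIdx_eq {L₁ L₂ L₃ M : LagGr n} (hM : ∀ L ∈ [L₁, L₂, L₃], Disjoint L.val M.val) :
    duiIdx L₁ L₂ L₃ = auxIdx L₁ L₂ L₃ M :=
  auxIdx_eq (exists_transversal [L₁, L₂, L₃]).choose_spec hM

lemma disjoint_graphOf_vertSub (A : Matrix (Fin n) (Fin n) ℂ) :
    Disjoint (graphOf A) (vertSub n) := by
  rw [Submodule.disjoint_def]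
  intro x hx hx'
  rw [mem_graphOf] at hx
  rw [mem_vertSub] at hx'
  refine Prod.ext hx' ?_
  rw [hx, hx', mulVec_zero]
  rfl

lemma duiIdx_axioms : SatisfiesDuiAxioms (duiIdx (n := n)) := by
  refine ⟨?_, ?_, ?_⟩
  · intro A hA L₁ L₂ L₃ e1 e2 e3
    obtain ⟨M, hM⟩ := exists_transversal [L₁, L₂, L₃]
    rw [duiIdx_eq hM]
    simp only [List.mem_cons, List.not_mem_nil, or_false, forall_eq_or_imp, forall_eq] at hM
    have d13 : Disjoint L₁.val L₃.val := by
      rw [e1, e3]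
      exact disjoint_graphOf_vertSub 0
    have d23 : Disjoint L₂.val L₃.val := by
      rw [e2, e3]
      exact disjoint_graphOf_vertSub A
    have h := qT_cocycle L₁.2 L₂.2 L₃.2 M.2 d13 hM.1 d23 hM.2.1 hM.2.2
    have h0 : qT L₁.val L₂.val L₃.val = negIdxM A := by
      rw [e1, e2, e3, qT_graph_graph_vert Matrix.isHermitian_zero, sub_zero, negIdxM_eq]
    rw [h0] at h
    unfold auxIdx
    linarith
  · intro S hS L₁ L₂ L₃ M₁ M₂ M₃ e1 e2 e3
    obtain ⟨K, hK⟩ := exists_transversal [L₁, L₂, L₃]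
    rw [duiIdx_eq hK]
    simp only [List.mem_cons, List.not_mem_nil, or_false, forall_eq_or_imp, forall_eq] at hK
    rw [duiIdx_eq (M := ⟨K.val.map S.toLinearMap, isLagrangian_map hS K.2⟩)]
    · simp only [auxIdx, e1, e2, e3, qT_map hS]
    · simp only [List.mem_cons, List.not_mem_nil, or_false, forall_eq_or_imp, forall_eq, e1, e2,
        e3]
      exact ⟨disjoint_map S hK.1, disjoint_map S hK.2.1, disjoint_map S hK.2.2⟩
  · intro L₁ L₂ L₃ L₄
    obtain ⟨K, hK⟩ := exists_transversal [L₁, L₂, L₃, L₄]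
    rw [duiIdx_eq (M := K), duiIdx_eq (M := K), duiIdx_eq (M := K), duiIdx_eq (M := K)]
    · unfold auxIdx
      ring
    all_goals
      intro L hL
      apply hK
      simp only [List.mem_cons, List.not_mem_nil, or_false] at hL ⊢
      tauto

/-- The axioms determine `f L₁ L₂ M` when `L₁` and `L₂` are transversal to `M`: normalization and
invariance suffice, because `(L₁, M)` can be moved to `(G_0, G_∞)`. -/
lemma axioms_eq_qT {f : LagGr n → LagGr n → LagGr n → ℤ} (hf : SatisfiesDuiAxioms f)
    {L₁ L₂ M : LagGr n} (h1 : Disjoint L₁.val M.val) (h2 : Disjoint L₂.val M.val) :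
    f L₁ L₂ M = qT L₁.val L₂.val M.val := by
  obtain ⟨S, hS, e1, eM⟩ := exists_symplectic L₁.2 M.2 h1
  have h2' := disjoint_map S h2
  rw [eM] at h2'
  obtain ⟨A, hA, e2⟩ := exists_eq_graphOf (isLagrangian_map hS L₂.2) h2'
  have hinv := hf.2.1 S hS L₁ L₂ M ⟨_, isLagrangian_map hS L₁.2⟩ ⟨_, isLagrangian_map hS L₂.2⟩
    ⟨_, isLagrangian_map hS M.2⟩ rfl rfl rfl
  rw [← hinv, hf.1 A hA _ _ _ e1 e2 eM, ← qT_map hS, e1, e2, eM,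
    qT_graph_graph_vert Matrix.isHermitian_zero, sub_zero, negIdxM_eq]

end Triple

/-- For every `n ≥ 1` there is exactly one function `f : Λ(n)³ → ℤ` satisfying the
Duistermaat axioms. -/
theorem duistermaat_existence_uniqueness (n : ℕ) (hn : 1 ≤ n) :
    ∃! f : LagGr n → LagGr n → LagGr n → ℤ, SatisfiesDuiAxioms f := by
  refine ⟨duiIdx, duiIdx_axioms, fun f hf => ?_⟩
  funext L₁ L₂ L₃
  obtain ⟨M, hM⟩ := exists_transversal [L₁, L₂, L₃]
  rw [duiIdx_eq hM]
  simp only [List.mem_cons, List.not_mem_nil, or_false, forall_eq_or_imp, forall_eq] at hM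
  have h := hf.2.2 L₁ L₂ L₃ M
  rw [axioms_eq_qT hf hM.1 hM.2.1, axioms_eq_qT hf hM.1 hM.2.2,
    axioms_eq_qT hf hM.2.1 hM.2.2] at h
  unfold auxIdx
  linarith
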